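/- There exists a constant C > 0, depending only on n, κ1 and C₀, such that for every x = (x', x_n) ∈ Ω₁: (i) for each tangential index α ∈ {1,…,n−1}, |∂_α ũ(x)| ≤ C·|x'|/(ε + |x'|²)·|φ(x') − ψ(x')| + C·(‖∇φ‖_∞ + ‖∇ψ‖_∞); (ii) ∂_n ũ(x) = (φ(x') − ψ(x'))/δ(x'), and consequently |φ(x') − ψ(x')|/(C·(ε + |x'|²)) ≤ |∂_n ũ(x)| ≤ C·|φ(x') − ψ(x')|/(ε + |x'|²). -/

import Mathlib

/-!
On the fibre over `x'` the function `ū` is affine in `x_n` and takes values in `(0, 1)`, and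
differentiating the quotient gives, with `s = ū(x)`,
`Dū(x) v = (v_n - (1 - s) ∇h2(x')·v' - s ∇h1(x')·v') / δ(x')`.
Hence `Dũ(x) v = s ∇φ·v' + (1 - s) ∇ψ·v' + (φ - ψ) Dū(x) v`. The vertical derivative is read off
directly and compared through the bounds on `δ`. For the tangential ones, `∇h_i(0') = 0` and the
`C²`-bound give `|∇h_i(x')| ≤ κ1 |x'|` by the mean value inequality.

The norms are suprema of `fderiv` over the *closed* ball, where `fderiv` need not be the
one-sided derivative at boundary points. These suprema are nevertheless genuine (bounded):
wherever the two-sided derivative exists it agrees with the derivative within the ball, which is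
continuous on a compact set, and elsewhere it is `0`
(`norm_fderiv_le_within`, `norm_fderiv_fderiv_le_within`).
-/

open MeasureTheory Metric Finset

noncomputable section

/-- `ℝ^{n-1}`, the horizontal (tangential) variables `x'`. -/
abbrev Ep (n : ℕ) := EuclideanSpace ℝ (Fin (n - 1))

/-- `ℝ^n = ℝ^{n-1} × ℝ`, points written `x = (x', x_n)`. -/
abbrev Efull (n : ℕ) := Ep n × ℝ

/-- The narrow region `Ω_r`. -/
def Omega (n : ℕ) (ε : ℝ) (h1 h2 : Ep n → ℝ) (r : ℝ) : Set (Efull n) :=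
  {x | ‖x.1‖ < r ∧ -ε/2 + h2 x.1 < x.2 ∧ x.2 < ε/2 + h1 x.1}

/-- Top boundary `Γ_r⁺`. -/
def Gammap (n : ℕ) (ε : ℝ) (h1 : Ep n → ℝ) (r : ℝ) : Set (Efull n) :=
  {x | ‖x.1‖ ≤ r ∧ x.2 = ε/2 + h1 x.1}

/-- Bottom boundary `Γ_r⁻`. -/
def Gammam (n : ℕ) (ε : ℝ) (h2 : Ep n → ℝ) (r : ℝ) : Set (Efull n) :=
  {x | ‖x.1‖ ≤ r ∧ x.2 = -ε/2 + h2 x.1}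

/-- `Ω̂_s(x₀) = {x ∈ Ω_{1/2} : |x' - x₀'| < s}`. -/
def OmegaHat (n : ℕ) (ε : ℝ) (h1 h2 : Ep n → ℝ) (x0 : Efull n) (s : ℝ) : Set (Efull n) :=
  {x | x ∈ Omega n ε h1 h2 (1/2) ∧ ‖x.1 - x0.1‖ < s}

/-- The `n` coordinate directions of `ℝ^{n-1} × ℝ`: the first `n-1` are the horizontal
Euclidean basis vectors, the last is the vertical direction. -/
def dir (n : ℕ) (α : Fin n) : Efull n :=
  if h : (α : ℕ) < n - 1 then (EuclideanSpace.single (⟨(α : ℕ), h⟩ : Fin (n - 1)) 1, (0:ℝ))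
  else (0, 1)

/-- Tangential direction `e_α` for `α ∈ {1, …, n-1}`. -/
def tang (n : ℕ) (α : Fin (n - 1)) : Efull n := (EuclideanSpace.single α 1, (0:ℝ))

/-- Vertical direction `e_n`. -/
def vert (n : ℕ) : Efull n := (0, 1)

/-- Pointwise Laplacian `Δu = Σ_α ∂_α∂_α u`. -/
def lapl (n : ℕ) (u : Efull n → ℝ) (x : Efull n) : ℝ :=
  ∑ α : Fin n, fderiv ℝ (fun y => fderiv ℝ u y (dir n α)) x (dir n α)

/-- The auxiliary function `ū(x', x_n) = (x_n - h2(x') + ε/2)/(ε + h1(x') - h2(x'))`. -/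
def ubar (n : ℕ) (ε : ℝ) (h1 h2 : Ep n → ℝ) (x : Efull n) : ℝ :=
  (x.2 - h2 x.1 + ε/2) / (ε + h1 x.1 - h2 x.1)

/-- The auxiliary function `ũ = φ(x')·ū + ψ(x')·(1 - ū)`. -/
def util (n : ℕ) (ε : ℝ) (h1 h2 φ ψ : Ep n → ℝ) (x : Efull n) : ℝ :=
  φ x.1 * ubar n ε h1 h2 x + ψ x.1 * (1 - ubar n ε h1 h2 x)

/-- `C²`-norm on the closed unit ball: `sup_{|x'| ≤ 1} (|f| + |∇f| + |∇²f|)`. -/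
def C2norm {F : Type*} [NormedAddCommGroup F] [NormedSpace ℝ F] (n : ℕ)
    (f : Ep n → F) : ℝ :=
  ⨆ y : closedBall (0 : Ep n) 1,
    (‖f (y : Ep n)‖ + ‖fderiv ℝ f (y : Ep n)‖ + ‖fderiv ℝ (fderiv ℝ f) (y : Ep n)‖)

/-- `C²(S)`-norm of a function on `ℝ^n`. -/
def C2normOn (n : ℕ) (S : Set (Efull n)) (f : Efull n → ℝ) : ℝ :=
  ⨆ y : S,
    (‖f (y : Efull n)‖ + ‖fderiv ℝ f (y : Efull n)‖ + ‖fderiv ℝ (fderiv ℝ f) (y : Efull n)‖)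

/-- `‖∇f‖_∞ = sup_{|x'| ≤ 1} |∇f(x')|`. -/
def gradSup {F : Type*} [NormedAddCommGroup F] [NormedSpace ℝ F] (n : ℕ) (f : Ep n → F) : ℝ :=
  ⨆ y : closedBall (0 : Ep n) 1, ‖fderiv ℝ f (y : Ep n)‖

/-- `‖∇²f‖_∞ = sup_{|x'| ≤ 1} |∇²f(x')|`. -/
def hessSup {F : Type*} [NormedAddCommGroup F] [NormedSpace ℝ F] (n : ℕ) (f : Ep n → F) : ℝ :=
  ⨆ y : closedBall (0 : Ep n) 1, ‖fderiv ℝ (fderiv ℝ f) (y : Ep n)‖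

/-- The geometric hypotheses on `h1, h2`: `C²` on the closed unit ball, the two graphs
do not touch, flatness at the origin, strict convexity of the gap, and `C²`-bound `κ1`. -/
def HGeom (n : ℕ) (ε κ0 κ1 : ℝ) (h1 h2 : Ep n → ℝ) : Prop :=
  ContDiffOn ℝ 2 h1 (closedBall 0 1) ∧ ContDiffOn ℝ 2 h2 (closedBall 0 1) ∧
  (∀ y : Ep n, ‖y‖ ≤ 1 → -ε/2 + h2 y < ε/2 + h1 y) ∧
  h1 0 = 0 ∧ h2 0 = 0 ∧ fderiv ℝ h1 0 = 0 ∧ fderiv ℝ h2 0 = 0 ∧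
  (∀ v : Ep n, κ0 * ‖v‖^2 ≤ fderiv ℝ (fderiv ℝ (fun y => h1 y - h2 y)) 0 v v) ∧
  C2norm n h1 + C2norm n h2 ≤ κ1

/-- Comparability `(ε + |x'|²)/C₀ ≤ δ(x') ≤ C₀ (ε + |x'|²)`. -/
def DeltaComp (n : ℕ) (ε C₀ : ℝ) (h1 h2 : Ep n → ℝ) : Prop :=
  ∀ y : Ep n, ‖y‖ ≤ 1 →
    (ε + ‖y‖^2) / C₀ ≤ ε + h1 y - h2 y ∧ ε + h1 y - h2 y ≤ C₀ * (ε + ‖y‖^2)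

/-- Hypotheses on the coefficients: `C²`-regularity with total `C²(Ω₁)`-norm at most `κ2`,
boundedness `|A| ≤ Λ`, and the weak ellipticity (Legendre) condition with constant `λ`. -/
def CoeffHyp (n N : ℕ) (ε lam Lam κ2 : ℝ) (h1 h2 : Ep n → ℝ)
    (A : Fin n → Fin n → Fin N → Fin N → Efull n → ℝ)
    (B : Fin n → Fin N → Fin N → Efull n → ℝ)
    (Cc : Fin n → Fin N → Fin N → Efull n → ℝ)
    (Dc : Fin N → Fin N → Efull n → ℝ) : Prop :=
  (∀ α β i j, ContDiffOn ℝ 2 (A α β i j) (Omega n ε h1 h2 1)) ∧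
  (∀ α i j, ContDiffOn ℝ 2 (B α i j) (Omega n ε h1 h2 1)) ∧
  (∀ β i j, ContDiffOn ℝ 2 (Cc β i j) (Omega n ε h1 h2 1)) ∧
  (∀ i j, ContDiffOn ℝ 2 (Dc i j) (Omega n ε h1 h2 1)) ∧
  ((∑ α : Fin n, ∑ β : Fin n, ∑ i : Fin N, ∑ j : Fin N,
      C2normOn n (Omega n ε h1 h2 1) (A α β i j)) +
   (∑ α : Fin n, ∑ i : Fin N, ∑ j : Fin N, C2normOn n (Omega n ε h1 h2 1) (B α i j)) +
   (∑ β : Fin n, ∑ i : Fin N, ∑ j : Fin N, C2normOn n (Omega n ε h1 h2 1) (Cc β i j)) +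
   (∑ i : Fin N, ∑ j : Fin N, C2normOn n (Omega n ε h1 h2 1) (Dc i j)) ≤ κ2) ∧
  (∀ α β i j, ∀ x ∈ Omega n ε h1 h2 1, |A α β i j x| ≤ Lam) ∧
  (∀ ξ : Efull n → EuclideanSpace ℝ (Fin N), ContDiff ℝ (⊤ : ℕ∞) ξ →
    HasCompactSupport ξ → tsupport ξ ⊆ Omega n ε h1 h2 1 →
    lam * ∫ x in Omega n ε h1 h2 1, ‖fderiv ℝ ξ x‖^2 ≤
      ∫ x in Omega n ε h1 h2 1,
        ∑ α : Fin n, ∑ β : Fin n, ∑ i : Fin N, ∑ j : Fin N,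
          A α β i j x * fderiv ℝ ξ x (dir n α) i * fderiv ℝ ξ x (dir n β) j)

/-- `u` is a weak solution of
`∂_α(A^{αβ}_{ij} ∂_β u^j + B^α_{ij} u^j) + C^β_{ij} ∂_β u^j + D_{ij} u^j = 0` in `Ω₁`. -/
def WeakSol (n N : ℕ) (ε : ℝ) (h1 h2 : Ep n → ℝ)
    (A : Fin n → Fin n → Fin N → Fin N → Efull n → ℝ)
    (B : Fin n → Fin N → Fin N → Efull n → ℝ)
    (Cc : Fin n → Fin N → Fin N → Efull n → ℝ)
    (Dc : Fin N → Fin N → Efull n → ℝ)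
    (u : Efull n → EuclideanSpace ℝ (Fin N)) : Prop :=
  ContDiffOn ℝ 1 u (Omega n ε h1 h2 1) ∧
  IntegrableOn (fun x => ‖u x‖^2 + ‖fderiv ℝ u x‖^2) (Omega n ε h1 h2 1) ∧
  ∀ ζ : Efull n → EuclideanSpace ℝ (Fin N), ContDiff ℝ (⊤ : ℕ∞) ζ →
    HasCompactSupport ζ → tsupport ζ ⊆ Omega n ε h1 h2 1 →
    (∫ x in Omega n ε h1 h2 1,
      ((∑ α : Fin n, ∑ i : Fin N,
          ((∑ β : Fin n, ∑ j : Fin N, A α β i j x * fderiv ℝ u x (dir n β) j) +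
            ∑ j : Fin N, B α i j x * u x j) * fderiv ℝ ζ x (dir n α) i) -
        ∑ i : Fin N,
          ((∑ β : Fin n, ∑ j : Fin N, Cc β i j x * fderiv ℝ u x (dir n β) j) +
            ∑ j : Fin N, Dc i j x * u x j) * ζ x i)) = 0

/-- `u` attains the boundary values `(φ, ψ)` on `Γ₁⁺` and `Γ₁⁻`. -/
def AttainsBV {F : Type*} [NormedAddCommGroup F] [NormedSpace ℝ F] (n : ℕ) (ε : ℝ)
    (h1 h2 : Ep n → ℝ) (u : Efull n → F) (φ ψ : Ep n → F) : Prop :=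
  ContinuousOn u (Omega n ε h1 h2 1 ∪ Gammap n ε h1 1 ∪ Gammam n ε h2 1) ∧
  (∀ y : Ep n, ‖y‖ ≤ 1 → u (y, ε/2 + h1 y) = φ y ∧ u (y, -ε/2 + h2 y) = ψ y)

/-- `u` is a harmonic function on `Ω₁` with boundary values `φ` on `Γ₁⁺` and `ψ` on `Γ₁⁻`. -/
def HarmBV (n : ℕ) (ε : ℝ) (h1 h2 : Ep n → ℝ) (u : Efull n → ℝ) (φ ψ : Ep n → ℝ) : Prop :=
  ContDiffOn ℝ 2 u (Omega n ε h1 h2 1) ∧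
  (∀ x ∈ Omega n ε h1 h2 1, lapl n u x = 0) ∧
  IntegrableOn (fun x => ‖u x‖^2 + ‖fderiv ℝ u x‖^2) (Omega n ε h1 h2 1) ∧
  AttainsBV n ε h1 h2 u φ ψ

theorem uniqueDiffOn_unitBall (n : ℕ) : UniqueDiffOn ℝ (closedBall (0 : Ep n) 1) :=
  uniqueDiffOn_convex (convex_closedBall _ _)
    ⟨0, interior_mono ball_subset_closedBall (by rw [isOpen_ball.interior_eq]; simp)⟩

theorem norm_fderiv_le_within {n : ℕ} {f : Ep n → ℝ} {y : Ep n}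
    (hy : y ∈ closedBall (0 : Ep n) 1) :
    ‖fderiv ℝ f y‖ ≤ ‖fderivWithin ℝ f (closedBall 0 1) y‖ := by
  by_cases hd : DifferentiableAt ℝ f y
  · rw [hd.fderivWithin (uniqueDiffOn_unitBall n y hy)]
  · rw [fderiv_zero_of_not_differentiableAt hd, norm_zero]
    exact norm_nonneg _

/-- At a boundary point where `fderiv ℝ f` is differentiable, it is the continuous extension of
the gradient from the open ball, so its derivative is the one computed within the ball. -/
theorem norm_fderiv_fderiv_le_within {n : ℕ} {f : Ep n → ℝ}
    (hf : ContDiffOn ℝ 2 f (closedBall 0 1)) {y : Ep n} (hy : y ∈ closedBall (0 : Ep n) 1) :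
    ‖fderiv ℝ (fderiv ℝ f) y‖ ≤
      ‖fderivWithin ℝ (fderivWithin ℝ f (closedBall 0 1)) (closedBall 0 1) y‖ := by
  by_cases hd : DifferentiableAt ℝ (fderiv ℝ f) y
  · have hcl : y ∈ closure (ball (0 : Ep n) 1) := by
      rwa [closure_ball (0 : Ep n) one_ne_zero]
    have hu : UniqueDiffWithinAt ℝ (ball (0 : Ep n) 1) y :=
      uniqueDiffWithinAt_convex (convex_ball _ _)
        ⟨0, by rw [isOpen_ball.interior_eq]; simp⟩ hcl
    have hG : DifferentiableOn ℝ (fderivWithin ℝ f (closedBall 0 1)) (closedBall 0 1) :=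
      (hf.fderivWithin (m := 1) (uniqueDiffOn_unitBall n) (by norm_num)).differentiableOn
        (by norm_num)
    have hGy := (hG y hy).hasFDerivWithinAt.mono ball_subset_closedBall
    have heq : ∀ z ∈ ball (0 : Ep n) 1,
        fderiv ℝ f z = fderivWithin ℝ f (closedBall 0 1) z := fun z hz =>
      (fderivWithin_of_mem_nhds
        (Filter.mem_of_superset (isOpen_ball.mem_nhds hz) ball_subset_closedBall)).symm
    have hne : (nhdsWithin y (ball (0 : Ep n) 1)).NeBot := mem_closure_iff_nhdsWithin_neBot.1 hcl
    have hval : fderiv ℝ f y = fderivWithin ℝ f (closedBall 0 1) y := by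
      have t1 := hd.continuousAt.continuousWithinAt (s := ball (0 : Ep n) 1)
      have t2 := hGy.continuousWithinAt
      refine tendsto_nhds_unique (t1 : Filter.Tendsto _ _ _) (Filter.Tendsto.congr' ?_ t2)
      filter_upwards [self_mem_nhdsWithin] with z hz using (heq z hz).symm
    have h1 := hGy.congr heq hval
    rw [hu.eq hd.hasFDerivAt.hasFDerivWithinAt h1]
  · rw [fderiv_zero_of_not_differentiableAt hd]
    exact ContinuousLinearMap.opNorm_zero.le.trans (ContinuousLinearMap.opNorm_nonneg _)

theorem norm_fderiv_le_gradSup {n : ℕ} {f : Ep n → ℝ}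
    (hf : ContDiffOn ℝ 2 f (closedBall 0 1)) {y : Ep n} (hy : ‖y‖ ≤ 1) :
    ‖fderiv ℝ f y‖ ≤ gradSup n f := by
  have hc : ContinuousOn (fderivWithin ℝ f (closedBall 0 1)) (closedBall 0 1) :=
    hf.continuousOn_fderivWithin (uniqueDiffOn_unitBall n) (by norm_num)
  obtain ⟨M, hM⟩ := (isCompact_closedBall (0 : Ep n) 1).exists_bound_of_continuousOn hc
  have hb : BddAbove (Set.range fun y : closedBall (0 : Ep n) 1 => ‖fderiv ℝ f (y : Ep n)‖) := by
    refine ⟨M, ?_⟩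
    rintro _ ⟨z, rfl⟩
    exact (norm_fderiv_le_within z.2).trans (hM z z.2)
  exact le_ciSup hb (⟨y, by simpa using hy⟩ : closedBall (0 : Ep n) 1)

theorem gradSup_nonneg {n : ℕ} (f : Ep n → ℝ) : 0 ≤ gradSup n f :=
  Real.iSup_nonneg fun _ => norm_nonneg _

theorem C2norm_nonneg {n : ℕ} (f : Ep n → ℝ) : 0 ≤ C2norm n f :=
  Real.iSup_nonneg fun _ => by positivity

theorem norm_hess_le_C2norm {n : ℕ} {f : Ep n → ℝ}
    (hf : ContDiffOn ℝ 2 f (closedBall 0 1)) {y : Ep n} (hy : ‖y‖ ≤ 1) :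
    ‖fderiv ℝ (fderiv ℝ f) y‖ ≤ C2norm n f := by
  have hK := isCompact_closedBall (0 : Ep n) 1
  have hu := uniqueDiffOn_unitBall n
  obtain ⟨M0, hM0⟩ := hK.exists_bound_of_continuousOn hf.continuousOn
  obtain ⟨M1, hM1⟩ := hK.exists_bound_of_continuousOn
    (hf.continuousOn_fderivWithin hu (by norm_num))
  obtain ⟨M2, hM2⟩ := hK.exists_bound_of_continuousOn
    ((hf.fderivWithin (m := 1) hu (by norm_num)).continuousOn_fderivWithin hu (by norm_num))
  have hb : BddAbove (Set.range fun y : closedBall (0 : Ep n) 1 =>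
      (‖f (y : Ep n)‖ + ‖fderiv ℝ f (y : Ep n)‖ + ‖fderiv ℝ (fderiv ℝ f) (y : Ep n)‖)) := by
    refine ⟨M0 + M1 + M2, ?_⟩
    rintro _ ⟨z, rfl⟩
    exact add_le_add (add_le_add (hM0 z z.2) ((norm_fderiv_le_within z.2).trans (hM1 z z.2)))
      ((norm_fderiv_fderiv_le_within hf z.2).trans (hM2 z z.2))
  have h := le_ciSup hb (⟨y, by simpa using hy⟩ : closedBall (0 : Ep n) 1)
  refine le_trans ?_ h
  have := norm_nonneg (f y)
  have := norm_nonneg (fderiv ℝ f y)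
  simp only
  linarith

theorem differentiableAt_of_ball {n : ℕ} {f : Ep n → ℝ}
    (hf : ContDiffOn ℝ 2 f (closedBall 0 1)) {y : Ep n} (hy : ‖y‖ < 1) :
    DifferentiableAt ℝ f y :=
  (hf.differentiableOn (by norm_num)).differentiableAt
    (Filter.mem_of_superset (isOpen_ball.mem_nhds (by simpa using hy)) ball_subset_closedBall)

/-- Mean value inequality for `∇f` on the unit ball, starting from `∇f(0') = 0`. -/
theorem norm_fderiv_le_mul {n : ℕ} {f : Ep n → ℝ} {K : ℝ}
    (hf : ContDiffOn ℝ 2 f (closedBall 0 1)) (h0 : fderiv ℝ f 0 = 0) (hK : C2norm n f ≤ K)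
    {y : Ep n} (hy : ‖y‖ < 1) :
    ‖fderiv ℝ f y‖ ≤ K * ‖y‖ := by
  have hg : DifferentiableOn ℝ (fderiv ℝ f) (ball (0 : Ep n) 1) :=
    ((hf.mono ball_subset_closedBall).fderiv_of_isOpen (m := 1) isOpen_ball
      (by norm_num)).differentiableOn (by norm_num)
  have := (convex_ball (0 : Ep n) 1).norm_image_sub_le_of_norm_fderiv_le (𝕜 := ℝ)
    (f := fderiv ℝ f) (C := K) (x := 0) (y := y)
    (fun z hz => hg.differentiableAt (isOpen_ball.mem_nhds hz))
    (fun z hz => (norm_hess_le_C2norm hf (by simpa using (mem_ball_zero_iff.1 hz).le)).trans hK)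
    (by simp) (by simpa using hy)
  simpa [h0] using this

/-- The derivative of `ũ` with `s = ū(x)`, arranged so that the horizontal part of `Dū` is
a convex combination of `∇h1` and `∇h2` divided by `δ`. -/
theorem fderiv_util_apply {n : ℕ} {ε : ℝ} {h1 h2 φ ψ : Ep n → ℝ} {x : Efull n}
    (d1 : DifferentiableAt ℝ h1 x.1) (d2 : DifferentiableAt ℝ h2 x.1)
    (dφ : DifferentiableAt ℝ φ x.1) (dψ : DifferentiableAt ℝ ψ x.1)
    (hδ : ε + h1 x.1 - h2 x.1 ≠ 0) (v : Efull n) :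
    fderiv ℝ (util n ε h1 h2 φ ψ) x v =
      ubar n ε h1 h2 x * fderiv ℝ φ x.1 v.1 + (1 - ubar n ε h1 h2 x) * fderiv ℝ ψ x.1 v.1 +
      (φ x.1 - ψ x.1) * ((v.2 - ((1 - ubar n ε h1 h2 x) * fderiv ℝ h2 x.1 v.1 +
        ubar n ε h1 h2 x * fderiv ℝ h1 x.1 v.1)) / (ε + h1 x.1 - h2 x.1)) := by
  have hfst : HasFDerivAt (Prod.fst : Efull n → Ep n) (ContinuousLinearMap.fst ℝ _ _) x := hasFDerivAt_fst
  have hsnd : HasFDerivAt (Prod.snd : Efull n → ℝ) (ContinuousLinearMap.snd ℝ _ _) x := hasFDerivAt_snd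
  have e1 := d1.hasFDerivAt.comp x hfst
  have e2 := d2.hasFDerivAt.comp x hfst
  have eφ := dφ.hasFDerivAt.comp x hfst
  have eψ := dψ.hasFDerivAt.comp x hfst
  have ei := (hasDerivAt_inv hδ).comp_hasFDerivAt x ((e1.const_add ε).sub e2)
  have eu := ((hsnd.sub e2).add_const (ε / 2)).mul ei
  have et := (eφ.mul eu).add (eψ.mul (eu.const_sub 1))
  have key := et.congr_of_eventuallyEq (f₁ := util n ε h1 h2 φ ψ)
    (Filter.Eventually.of_forall fun z => by simp [util, ubar, div_eq_mul_inv])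
  rw [key.fderiv]
  simp [ubar]
  field_simp
  ring

theorem stmt8 (n : ℕ) (hn : 2 ≤ n) (κ1 C₀ : ℝ) (hκ1 : 0 < κ1) (hC₀ : 1 ≤ C₀) :
    ∃ C : ℝ, 0 < C ∧
      ∀ κ0 : ℝ, 0 < κ0 → ∀ ε ∈ Set.Ioo (0:ℝ) 1, ∀ h1 h2 : Ep n → ℝ,
        HGeom n ε κ0 κ1 h1 h2 → DeltaComp n ε C₀ h1 h2 →
        ∀ φ ψ : Ep n → ℝ,
          ContDiffOn ℝ 2 φ (closedBall 0 1) → ContDiffOn ℝ 2 ψ (closedBall 0 1) →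
        ∀ x ∈ Omega n ε h1 h2 1,
          (∀ α : Fin (n - 1),
            |fderiv ℝ (util n ε h1 h2 φ ψ) x (tang n α)| ≤
              C * ‖x.1‖ / (ε + ‖x.1‖^2) * |φ x.1 - ψ x.1| +
              C * (gradSup n φ + gradSup n ψ)) ∧
          fderiv ℝ (util n ε h1 h2 φ ψ) x (vert n) =
            (φ x.1 - ψ x.1) / (ε + h1 x.1 - h2 x.1) ∧
          |φ x.1 - ψ x.1| / (C * (ε + ‖x.1‖^2)) ≤
            |fderiv ℝ (util n ε h1 h2 φ ψ) x (vert n)| ∧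
          |fderiv ℝ (util n ε h1 h2 φ ψ) x (vert n)| ≤
            C * |φ x.1 - ψ x.1| / (ε + ‖x.1‖^2) := by
  refine ⟨C₀ * (κ1 + 1), by positivity, ?_⟩
  intro κ0 _ ε hε h1 h2 hG hD φ ψ hφ hψ x hx
  obtain ⟨c1, c2, -, -, -, g1, g2, -, hκ⟩ := hG
  obtain ⟨hx1, hlo, hhi⟩ := hx
  obtain ⟨hDl, hDu⟩ := hD x.1 hx1.le
  have hε0 : 0 < ε := hε.1
  have hC0 : 0 < C₀ := by linarith
  have hr : 0 < ε + ‖x.1‖ ^ 2 := by positivity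
  have hδ : 0 < ε + h1 x.1 - h2 x.1 := lt_of_lt_of_le (by positivity) hDl
  have hK1 : C2norm n h1 ≤ κ1 := by linarith [C2norm_nonneg h2]
  have hK2 : C2norm n h2 ≤ κ1 := by linarith [C2norm_nonneg h1]
  have hder := fderiv_util_apply (ε := ε) (differentiableAt_of_ball c1 hx1)
    (differentiableAt_of_ball c2 hx1) (differentiableAt_of_ball hφ hx1)
    (differentiableAt_of_ball hψ hx1) hδ.ne'
  have hvert : fderiv ℝ (util n ε h1 h2 φ ψ) x (vert n) =
      (φ x.1 - ψ x.1) / (ε + h1 x.1 - h2 x.1) := by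
    rw [hder]
    simp [vert, div_eq_mul_inv]
  have hs0 : 0 ≤ ubar n ε h1 h2 x := div_nonneg (by linarith) hδ.le
  have hs1 : ubar n ε h1 h2 x ≤ 1 := (div_le_one hδ).2 (by linarith)
  have hCle : C₀ ≤ C₀ * (κ1 + 1) := by nlinarith
  refine ⟨fun α => ?_, hvert, ?_, ?_⟩
  · rw [hder]
    set s := ubar n ε h1 h2 x
    set e : Ep n := EuclideanSpace.single α 1
    have hcomp : ∀ (L : Ep n →L[ℝ] ℝ) (M : ℝ), ‖L‖ ≤ M → |L e| ≤ M := fun L M hM => by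
      have h := L.le_opNorm e
      rw [show ‖e‖ = 1 by simp [e], mul_one, Real.norm_eq_abs] at h
      exact h.trans hM
    have bφ := hcomp _ _ (norm_fderiv_le_gradSup hφ hx1.le)
    have bψ := hcomp _ _ (norm_fderiv_le_gradSup hψ hx1.le)
    have b1 := hcomp _ _ (norm_fderiv_le_mul c1 g1 hK1 hx1)
    have b2 := hcomp _ _ (norm_fderiv_le_mul c2 g2 hK2 hx1)
    -- the weights `s` and `1 - s` are nonnegative, so bounds pass through the combination
    have hconv : ∀ a b A B : ℝ, |a| ≤ A → |b| ≤ B →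
        |s * a + (1 - s) * b| ≤ s * A + (1 - s) * B := fun a b A B ha hb => by
      refine (abs_add_le _ _).trans ?_
      rw [abs_mul, abs_mul, abs_of_nonneg hs0, abs_of_nonneg (sub_nonneg.2 hs1)]
      exact add_le_add (mul_le_mul_of_nonneg_left ha hs0)
        (mul_le_mul_of_nonneg_left hb (sub_nonneg.2 hs1))
    have k1 := hconv _ _ _ _ bφ bψ
    have k2 := hconv _ _ _ _ b1 b2
    have gφ := gradSup_nonneg φ
    have gψ := gradSup_nonneg ψ
    have k1' : s * gradSup n φ + (1 - s) * gradSup n ψ ≤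
        C₀ * (κ1 + 1) * (gradSup n φ + gradSup n ψ) := by
      have : 1 ≤ C₀ * (κ1 + 1) := hC₀.trans hCle
      nlinarith [mul_nonneg (sub_nonneg.2 hs1) gφ, mul_nonneg hs0 gψ]
    have k3 : |(0 - ((1 - s) * fderiv ℝ h2 x.1 e + s * fderiv ℝ h1 x.1 e)) /
        (ε + h1 x.1 - h2 x.1)| ≤ C₀ * (κ1 + 1) * ‖x.1‖ / (ε + ‖x.1‖ ^ 2) := by
      rw [abs_div, abs_of_pos hδ, zero_sub, abs_neg, add_comm, div_le_div_iff₀ hδ hr]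
      have hr' : ε + ‖x.1‖ ^ 2 ≤ C₀ * (ε + h1 x.1 - h2 x.1) := by
        rw [div_le_iff₀ hC0] at hDl
        linarith
      calc |s * fderiv ℝ h1 x.1 e + (1 - s) * fderiv ℝ h2 x.1 e| * (ε + ‖x.1‖ ^ 2)
          ≤ ((κ1 + 1) * ‖x.1‖) * (C₀ * (ε + h1 x.1 - h2 x.1)) := by
            refine mul_le_mul ?_ hr' hr.le (by positivity)
            nlinarith [norm_nonneg x.1]
        _ = _ := by ring
    calc _ ≤ |s * fderiv ℝ φ x.1 e + (1 - s) * fderiv ℝ ψ x.1 e| +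
          |(φ x.1 - ψ x.1) * ((0 - ((1 - s) * fderiv ℝ h2 x.1 e + s * fderiv ℝ h1 x.1 e)) /
            (ε + h1 x.1 - h2 x.1))| := abs_add_le _ _
      _ ≤ _ := by
        rw [abs_mul, mul_comm |φ x.1 - ψ x.1|, add_comm]
        exact add_le_add (mul_le_mul_of_nonneg_right k3 (abs_nonneg _)) (k1.trans k1')
  · rw [hvert, abs_div, abs_of_pos hδ]
    refine div_le_div_of_nonneg_left (abs_nonneg _) hδ (hDu.trans ?_)
    exact mul_le_mul_of_nonneg_right hCle hr.le
  · rw [hvert, abs_div, abs_of_pos hδ, div_le_div_iff₀ hδ hr, mul_comm (C₀ * (κ1 + 1)), mul_assoc]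
    refine mul_le_mul_of_nonneg_left ?_ (abs_nonneg _)
    rw [div_le_iff₀ hC0] at hDl
    nlinarith
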